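/- For every a ≥ 1, the nilHecke ring NH_a is isomorphic as a ring to the matrix ring Mat_{a!}(Λ_a) of a!×a! matrices over the ring Λ_a = ℤ[x_1,…,x_a]^{S_a} of symmetric polynomials in a variables with integer coefficients. -/

import Mathlib

/-! The nilHecke ring `NH_a`, presented by generators and relations, is
isomorphic to the ring of `a! × a!` matrices over the ring of symmetric
polynomials `Λ_a = ℤ[x_1,…,x_a]^{S_a}`.  The generators are 0-indexed:
`u i` for `i : Fin (a-1)` is the paper's `u_{i+1}` and `χ j` for `j : Fin a`
is the paper's `χ_{j+1}`. -/

noncomputable section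

/-- Generators of the nilHecke ring: `Sum.inl i` is the generator `u_{i+1}`
and `Sum.inr j` is the generator `χ_{j+1}`. -/
abbrev NHGen (a : ℕ) := Fin (a - 1) ⊕ Fin a

/-- The generator `u` (0-indexed). -/
abbrev uGen (a : ℕ) (i : Fin (a - 1)) : FreeAlgebra ℤ (NHGen a) :=
  FreeAlgebra.ι ℤ (Sum.inl i)

/-- The generator `χ` (0-indexed). -/
abbrev chiGen (a : ℕ) (j : Fin a) : FreeAlgebra ℤ (NHGen a) :=
  FreeAlgebra.ι ℤ (Sum.inr j)

/-- The defining relations of the nilHecke ring. -/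
inductive NHRel (a : ℕ) : FreeAlgebra ℤ (NHGen a) → FreeAlgebra ℤ (NHGen a) → Prop
  | u_sq (i : Fin (a - 1)) : NHRel a (uGen a i * uGen a i) 0
  | braid (i : ℕ) (h : i + 1 < a - 1) :
      NHRel a (uGen a ⟨i, by omega⟩ * uGen a ⟨i + 1, h⟩ * uGen a ⟨i, by omega⟩)
        (uGen a ⟨i + 1, h⟩ * uGen a ⟨i, by omega⟩ * uGen a ⟨i + 1, h⟩)
  | u_comm (i j : Fin (a - 1)) (h : 1 < |((i : ℕ) : ℤ) - ((j : ℕ) : ℤ)|) :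
      NHRel a (uGen a i * uGen a j) (uGen a j * uGen a i)
  | chi_comm (i j : Fin a) :
      NHRel a (chiGen a i * chiGen a j) (chiGen a j * chiGen a i)
  | u_chi_comm (i : Fin (a - 1)) (j : Fin a)
      (h1 : (j : ℕ) ≠ (i : ℕ)) (h2 : (j : ℕ) ≠ (i : ℕ) + 1) :
      NHRel a (uGen a i * chiGen a j) (chiGen a j * uGen a i)
  | u_chi (i : ℕ) (h : i + 1 < a) :
      NHRel a (uGen a ⟨i, by omega⟩ * chiGen a ⟨i, by omega⟩)
        (1 + chiGen a ⟨i + 1, h⟩ * uGen a ⟨i, by omega⟩)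
  | chi_u (i : ℕ) (h : i + 1 < a) :
      NHRel a (chiGen a ⟨i, by omega⟩ * uGen a ⟨i, by omega⟩)
        (1 + uGen a ⟨i, by omega⟩ * chiGen a ⟨i + 1, h⟩)

/-- The nilHecke ring `NH_a`. -/
abbrev NilHecke (a : ℕ) := RingQuot (NHRel a)

/-!
Let `NH_a` act on `Pol = ℤ[x_1, …, x_a]`, with `u_i` acting by divided differences and `χ_j` by
multiplication by `x_j`; the action commutes with `Λ_a`. Let `w` be the product of the `u_i` along
a reduced word of the longest permutation. Then `u_i w = 0` for all `i`, so `w` maps `Pol` into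
`Λ_a`, and `n p w = (n • p) w` for `n ∈ NH_a` and `p ∈ Pol`. Peeling the factors of `w` off one at
a time with `χ_i u_i - u_i χ_{i+1} = 1` yields an identity `1 = ∑ p_i w q_i` with `a!` terms.

Multiplying this identity by `n` on the left shows that `n` is determined by the `n • p_i`, so the
action is faithful. Applying it to `f ∈ Pol` gives `f = ∑ w(q_i f) p_i` with `w(q_i f) ∈ Λ_a`, so a
`Λ_a`-linear `F` is the action of `∑ F(p_i) w q_i`, and the `a!` elements `p_i` span `Pol` over
`Λ_a`. As `Pol` has rank `a!` over `Λ_a` by Galois theory, they form a basis.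
-/

namespace NilHecke

section Sandwich

variable {A R : Type*} [CommRing A] [Ring R]

/-- `v` is a sum of `n` terms `φ p * w * φ q`, i.e. it has length at most `n` in the
`A`-bimodule generated by `w`, where `A` acts on both sides of `R` through `φ`. -/
def IsSandwichSum (φ : A →+* R) (n : ℕ) (w v : R) : Prop :=
  ∃ p q : Fin n → A, v = ∑ i, φ (p i) * w * φ (q i)

theorem IsSandwichSum.refl (φ : A →+* R) (w : R) : IsSandwichSum φ 1 w w :=
  ⟨1, 1, by simp⟩

theorem IsSandwichSum.trans {φ : A →+* R} {m n : ℕ} {u v w : R} (huv : IsSandwichSum φ m u v)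
    (hvw : IsSandwichSum φ n v w) : IsSandwichSum φ (m * n) u w := by
  obtain ⟨p, q, rfl⟩ := huv
  obtain ⟨p', q', rfl⟩ := hvw
  let e := (finProdFinEquiv (m := m) (n := n)).symm
  refine ⟨fun i ↦ p' (e i).2 * p (e i).1, fun i ↦ q (e i).1 * q' (e i).2, ?_⟩
  rw [e.sum_comp fun y ↦ φ (p' y.2 * p y.1) * u * φ (q y.1 * q' y.2), Fintype.sum_prod_type_right]
  simp only [Finset.mul_sum, Finset.sum_mul, map_mul, mul_assoc]

open Polynomial in
/-- With `L` the left multiplication by `φ (x m)` and `T` the right multiplication by `φ y`,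
`v k` is obtained from `v 0` by applying `∏ m < k, (L - T)`, a polynomial of degree `k` in `T`. -/
theorem isSandwichSum_of_recurrence (φ : A →+* R) (x : ℕ → A) (y : A) (v : ℕ → R) (k : ℕ)
    (hv : ∀ m < k, v (m + 1) = φ (x m) * v m - v m * φ y) :
    IsSandwichSum φ (k + 1) (v 0) (v k) := by
  let : Module A R := Module.compHom R φ
  have smul_eq (c : A) (r : R) : c • r = φ c * r := rfl
  have : IsScalarTower A R R := ⟨fun c r s ↦ mul_assoc (φ c) r s⟩
  let T : Module.End A R := LinearMap.mulRight A (φ y)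
  let P (m : ℕ) : A[X] := ∏ i ∈ Finset.range m, (C (x i) - X)
  have v_eq (m : ℕ) (hm : m ≤ k) : v m = aeval T (P m) (v 0) := by
    induction m with
    | zero => simp [P]
    | succ m ih =>
      rw [hv m hm, ih (by omega), show P (m + 1) = (C (x m) - X) * P m from
        Finset.prod_range_succ_comm _ m]
      simp [T, smul_eq]
  have degree_lt : (P k).natDegree < k + 1 := by
    refine Nat.lt_succ_of_le ((natDegree_prod_le _ _).trans ?_)
    refine (Finset.sum_le_card_nsmul _ _ 1 fun i _ ↦ ?_).trans (by simp)
    compute_degree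
  refine ⟨fun i ↦ (P k).coeff i, fun i ↦ y ^ (i : ℕ), ?_⟩
  rw [v_eq k le_rfl, aeval_eq_sum_range' degree_lt, Finset.sum_range]
  simp [T, smul_eq, mul_assoc]

end Sandwich

section LongestWord

variable {R : Type*} [Ring R]

/-- The product `u m * u (m + 1) * ⋯ * u (k - 1)`; it is `1` if `k ≤ m`. -/
def ascProd (u : ℕ → R) (m k : ℕ) : R := ((List.Ico m k).map u).prod

/-- The product of the `u i` along a reduced word of the longest element of the symmetric group
on `k` letters, `(u 0 ⋯ u (k - 2)) ⋯ (u 0 * u 1) * u 0`. -/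
def longestWord (u : ℕ → R) : ℕ → R
  | 0 => 1
  | k + 1 => ascProd u 0 k * longestWord u k

variable {u : ℕ → R}

theorem ascProd_self (m : ℕ) : ascProd u m m = 1 := by
  simp [ascProd]

theorem ascProd_eq_mul {m k : ℕ} (h : m < k) : ascProd u m k = u m * ascProd u (m + 1) k := by
  rw [ascProd, List.Ico.eq_cons h, List.map_cons, List.prod_cons, ascProd]

theorem ascProd_mul_ascProd {m l k : ℕ} (hml : m ≤ l) (hlk : l ≤ k) :
    ascProd u m l * ascProd u l k = ascProd u m k := by
  rw [ascProd, ascProd, ascProd, ← List.prod_append, ← List.map_append,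
    List.Ico.append_consecutive hml hlk]

theorem commute_ascProd {y : R} {m k : ℕ} (h : ∀ i, m ≤ i → i < k → Commute y (u i)) :
    Commute y (ascProd u m k) := by
  refine Commute.list_prod_right _ _ fun z hz ↦ ?_
  obtain ⟨i, hi, rfl⟩ := List.mem_map.mp hz
  exact h i (List.Ico.mem.mp hi).1 (List.Ico.mem.mp hi).2

theorem commute_longestWord {y : R} {k : ℕ} (h : ∀ i, i + 1 < k → Commute y (u i)) :
    Commute y (longestWord u k) := by
  induction k with
  | zero => exact Commute.one_right y
  | succ k ih =>
    exact (commute_ascProd fun i _ hi ↦ h i (by omega)).mul_right (ih fun i hi ↦ h i (by omega))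

/-- The relations of the nilCoxeter algebra on `a` strands for `u 0, …, u (a - 2)`. -/
structure IsNilCoxeter (a : ℕ) (u : ℕ → R) : Prop where
  sq : ∀ i, i + 1 < a → u i * u i = 0
  braid : ∀ i, i + 2 < a → u i * u (i + 1) * u i = u (i + 1) * u i * u (i + 1)
  comm : ∀ i j, i + 1 < j → j + 1 < a → Commute (u i) (u j)

theorem IsNilCoxeter.mul_ascProd {a : ℕ} (h : IsNilCoxeter a u) {m i k : ℕ} (hmi : m ≤ i)
    (hik : i + 1 < k) (hka : k < a) : u (i + 1) * ascProd u m k = ascProd u m k * u i := by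
  have left : Commute (u (i + 1)) (ascProd u m i) :=
    commute_ascProd fun j _ hj ↦ (h.comm j (i + 1) (by omega) (by omega)).symm
  have right : Commute (u i) (ascProd u (i + 2) k) :=
    commute_ascProd fun j hj _ ↦ h.comm i j (by omega) (by omega)
  have split : ascProd u m k = ascProd u m i * (u i * u (i + 1)) * ascProd u (i + 2) k := by
    rw [← ascProd_mul_ascProd hmi (by omega : i ≤ k), ascProd_eq_mul (by omega : i < k),
      ascProd_eq_mul hik]
    simp only [mul_assoc]
  calc u (i + 1) * ascProd u m k
      = ascProd u m i * (u (i + 1) * u i * u (i + 1)) * ascProd u (i + 2) k := by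
        simp only [split, ← mul_assoc, left.eq]
    _ = ascProd u m i * (u i * u (i + 1)) * (u i * ascProd u (i + 2) k) := by
        rw [← h.braid i (by omega)]
        simp only [mul_assoc]
    _ = ascProd u m k * u i := by
        rw [right.eq, split]
        simp only [mul_assoc]

theorem IsNilCoxeter.mul_longestWord {a : ℕ} (h : IsNilCoxeter a u) {k i : ℕ} (hka : k ≤ a)
    (hik : i + 1 < k) : u i * longestWord u k = 0 := by
  induction k generalizing i with
  | zero => omega
  | succ k ih =>
    rw [longestWord, ← mul_assoc]
    obtain _ | i := i
    · rw [ascProd_eq_mul (by omega), ← mul_assoc, h.sq 0 (by omega), zero_mul, zero_mul]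
    · rw [h.mul_ascProd (Nat.zero_le i) (by omega) (by omega), mul_assoc,
        ih (by omega) (by omega), mul_zero]

/-- The relations of the nilHecke ring on `a` strands used to slide `x 0, …, x (a - 1)` from left
to right through `u 0, …, u (a - 2)`. -/
structure IsNilHecke (a : ℕ) (u x : ℕ → R) : Prop extends IsNilCoxeter a u where
  mul_self : ∀ i, i + 1 < a → x i * u i = 1 + u i * x (i + 1)
  comm_of_ne : ∀ i j, i + 1 < a → j < a → j ≠ i → j ≠ i + 1 → Commute (x j) (u i)

theorem IsNilHecke.mul_ascProd_mul_longestWord {a : ℕ} {x : ℕ → R} (h : IsNilHecke a u x)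
    {m k : ℕ} (hmk : m < k) (hka : k < a) :
    x m * (ascProd u m k * longestWord u k) =
      ascProd u (m + 1) k * longestWord u k + ascProd u m k * longestWord u k * x k := by
  have slide_first {m : ℕ} (hmk : m < k) : x m * (ascProd u m k * longestWord u k) =
      ascProd u (m + 1) k * longestWord u k +
        u m * (x (m + 1) * (ascProd u (m + 1) k * longestWord u k)) := by
    rw [ascProd_eq_mul hmk, mul_assoc, ← mul_assoc, h.mul_self m (by omega), add_mul, one_mul,
      mul_assoc]
  rw [slide_first hmk, add_right_inj, ascProd_eq_mul hmk]
  induction hl : k - (m + 1) generalizing m with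
  | zero =>
    obtain rfl : m + 1 = k := by omega
    have comm : Commute (x (m + 1)) (longestWord u (m + 1)) :=
      commute_longestWord fun i _ ↦ h.comm_of_ne i _ (by omega) hka (by omega) (by omega)
    rw [ascProd_self, one_mul, mul_one, comm.eq, mul_assoc]
  | succ l ih =>
    have vanish : u m * (ascProd u (m + 2) k * longestWord u k) = 0 := by
      have comm : Commute (u m) (ascProd u (m + 2) k) :=
        commute_ascProd fun j hj _ ↦ h.comm m j (by omega) (by omega)
      rw [← mul_assoc, comm.eq, mul_assoc, h.mul_longestWord hka.le (by omega), mul_zero]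
    have hmk' : m + 1 < k := by omega
    rw [slide_first hmk', mul_add, vanish, zero_add, ih hmk' (by omega), ← ascProd_eq_mul hmk']
    simp only [mul_assoc]

theorem IsNilHecke.isSandwichSum_one_longestWord {A : Type*} [CommRing A] {φ : A →+* R} {a : ℕ}
    {x : ℕ → A} (h : IsNilHecke a u fun i ↦ φ (x i)) {k : ℕ} (hka : k ≤ a) :
    IsSandwichSum φ k.factorial (longestWord u k) 1 := by
  induction k with
  | zero => exact .refl φ 1
  | succ k ih =>
    refine IsSandwichSum.trans ?_ (ih (by omega))
    have step := isSandwichSum_of_recurrence φ x (x k)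
      (fun m ↦ ascProd u m k * longestWord u k) k fun m hm ↦
        eq_sub_of_add_eq (h.mul_ascProd_mul_longestWord hm hka).symm
    rwa [ascProd_self, one_mul] at step

end LongestWord

open MvPolynomial Equiv

section RenameSwap

variable {σ R : Type*} [DecidableEq σ] [CommSemiring R]

theorem rename_swap_rename_swap (i j : σ) (f : MvPolynomial σ R) :
    rename (swap i j) (rename (swap i j) f) = f := by
  rw [rename_rename, ← Perm.coe_mul, swap_mul_self, Perm.coe_one, rename_id_apply]

theorem rename_swap_smul_symmetric (i j : σ) (c : symmetricSubalgebra σ R)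
    (f : MvPolynomial σ R) : rename (swap i j) (c • f) = c • rename (swap i j) f := by
  rw [Algebra.smul_def, Algebra.smul_def, map_mul]
  exact congrArg (· * _) (c.2 _)

theorem rename_swap_braid {i j k : σ} (hij : i ≠ j) (hjk : j ≠ k) (hik : i ≠ k)
    (f : MvPolynomial σ R) :
    rename (swap i j) (rename (swap j k) (rename (swap i j) f)) =
      rename (swap j k) (rename (swap i j) (rename (swap j k) f)) := by
  have swaps_braid : swap i j * swap j k * swap i j = swap j k * swap i j * swap j k := by
    rw [swap_mul_swap_mul_swap hij hik, swap_comm i j, swap_comm j k,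
      swap_mul_swap_mul_swap hjk.symm hik.symm, swap_comm]
  simpa only [rename_rename, Perm.coe_mul, Function.comp_assoc] using
    congrArg (fun e : Perm σ ↦ rename e f) swaps_braid

end RenameSwap

section DividedDifference

variable {σ R : Type*} [CommRing R]

theorem X_sub_X_ne_zero [Nontrivial R] {i j : σ} (h : i ≠ j) :
    (X i - X j : MvPolynomial σ R) ≠ 0 :=
  sub_ne_zero.mpr (X_injective.ne h)

variable [DecidableEq σ]

theorem X_sub_X_dvd_sub_rename_swap (i j : σ) (f : MvPolynomial σ R) :
    X i - X j ∣ f - rename (swap i j) f := by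
  let π := Ideal.Quotient.mkₐ R (Ideal.span {(X i - X j : MvPolynomial σ R)})
  have π_X_eq : π (X i) = π (X j) :=
    Ideal.Quotient.eq.mpr (Ideal.mem_span_singleton_self _)
  have π_swap : π = π.comp (rename (swap i j)) := by
    ext k
    rw [AlgHom.comp_apply, rename_X]
    obtain rfl | hki := eq_or_ne k i
    · rw [swap_apply_left, π_X_eq]
    obtain rfl | hkj := eq_or_ne k j
    · rw [swap_apply_right, π_X_eq]
    · rw [swap_apply_of_ne_of_ne hki hkj]
  exact Ideal.mem_span_singleton.mp (Ideal.Quotient.eq.mp (DFunLike.congr_fun π_swap f))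

variable [IsDomain R] {i j k l : σ}

/-- The Demazure divided difference operator `f ↦ (f - s f) / (X i - X j)`, where `s` exchanges
`X i` and `X j`, as a map linear over the symmetric polynomials. -/
def dividedDifference (h : i ≠ j) :
    MvPolynomial σ R →ₗ[symmetricSubalgebra σ R] MvPolynomial σ R where
  toFun f := (X_sub_X_dvd_sub_rename_swap i j f).choose
  map_add' f g := by
    apply mul_left_cancel₀ (X_sub_X_ne_zero (R := R) h)
    rw [mul_add, ← (X_sub_X_dvd_sub_rename_swap i j f).choose_spec,
      ← (X_sub_X_dvd_sub_rename_swap i j g).choose_spec,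
      ← (X_sub_X_dvd_sub_rename_swap i j (f + g)).choose_spec, map_add, add_sub_add_comm]
  map_smul' c f := by
    apply mul_left_cancel₀ (X_sub_X_ne_zero (R := R) h)
    rw [RingHom.id_apply, mul_smul_comm, ← (X_sub_X_dvd_sub_rename_swap i j f).choose_spec,
      ← (X_sub_X_dvd_sub_rename_swap i j (c • f)).choose_spec, rename_swap_smul_symmetric,
      smul_sub]

theorem X_sub_X_mul_dividedDifference (h : i ≠ j) (f : MvPolynomial σ R) :
    (X i - X j) * dividedDifference h f = f - rename (swap i j) f :=
  (X_sub_X_dvd_sub_rename_swap i j f).choose_spec.symm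

theorem dividedDifference_eq_iff (h : i ≠ j) {f g : MvPolynomial σ R} :
    dividedDifference h f = g ↔ f - rename (swap i j) f = (X i - X j) * g := by
  rw [← X_sub_X_mul_dividedDifference h, mul_right_inj' (X_sub_X_ne_zero h)]

theorem dividedDifference_eq_zero_iff (h : i ≠ j) {f : MvPolynomial σ R} :
    dividedDifference h f = 0 ↔ rename (swap i j) f = f := by
  rw [dividedDifference_eq_iff, mul_zero, sub_eq_zero, eq_comm]

theorem dividedDifference_mul (h : i ≠ j) (f g : MvPolynomial σ R) :
    dividedDifference h (f * g) =
      dividedDifference h f * g + rename (swap i j) f * dividedDifference h g := by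
  rw [dividedDifference_eq_iff, map_mul]
  linear_combination -g * X_sub_X_mul_dividedDifference h f -
    rename (swap i j) f * X_sub_X_mul_dividedDifference h g

theorem dividedDifference_C (h : i ≠ j) (c : R) :
    dividedDifference h (C c : MvPolynomial σ R) = 0 := by
  rw [dividedDifference_eq_zero_iff, rename_C]

theorem dividedDifference_X_left (h : i ≠ j) :
    dividedDifference h (X i : MvPolynomial σ R) = 1 := by
  rw [dividedDifference_eq_iff, rename_X, swap_apply_left, mul_one]

theorem dividedDifference_X_right (h : i ≠ j) :
    dividedDifference h (X j : MvPolynomial σ R) = -1 := by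
  rw [dividedDifference_eq_iff, rename_X, swap_apply_right]
  ring

theorem dividedDifference_X_of_ne_of_ne (h : i ≠ j) (hki : k ≠ i) (hkj : k ≠ j) :
    dividedDifference h (X k : MvPolynomial σ R) = 0 := by
  rw [dividedDifference_eq_zero_iff, rename_X, swap_apply_of_ne_of_ne hki hkj]

theorem dividedDifference_symm (h : i ≠ j) (f : MvPolynomial σ R) :
    dividedDifference h.symm f = -dividedDifference h f := by
  rw [dividedDifference_eq_iff, swap_comm, ← X_sub_X_mul_dividedDifference h]
  ring

theorem rename_swap_dividedDifference (h : i ≠ j) (f : MvPolynomial σ R) :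
    rename (swap i j) (dividedDifference h f) = dividedDifference h f := by
  have swapped := congrArg (rename (swap i j)) (X_sub_X_mul_dividedDifference h f)
  simp only [map_mul, map_sub, rename_X, swap_apply_left, swap_apply_right,
    rename_swap_rename_swap] at swapped
  apply mul_left_cancel₀ (X_sub_X_ne_zero (R := R) h)
  linear_combination -swapped - X_sub_X_mul_dividedDifference h f

theorem dividedDifference_dividedDifference_self (h : i ≠ j) (f : MvPolynomial σ R) :
    dividedDifference h (dividedDifference h f) = 0 :=
  (dividedDifference_eq_zero_iff h).mpr (rename_swap_dividedDifference h f)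

theorem dividedDifference_comm (hij : i ≠ j) (hkl : k ≠ l) (hd : [i, j, k, l].Nodup)
    (f : MvPolynomial σ R) :
    dividedDifference hij (dividedDifference hkl f) =
      dividedDifference hkl (dividedDifference hij f) := by
  obtain ⟨⟨-, hik, hil⟩, ⟨hjk, hjl⟩, -⟩ :
      (i ≠ j ∧ i ≠ k ∧ i ≠ l) ∧ (j ≠ k ∧ j ≠ l) ∧ k ≠ l := by simpa using hd
  have swaps_comm : rename (swap i j) (rename (swap k l) f) =
      rename (swap k l) (rename (swap i j) f) := by
    rw [rename_rename, rename_rename, ← Perm.coe_mul, ← Perm.coe_mul,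
      (Perm.disjoint_swap_swap hd).commute.eq]
  have swap_kl := congrArg (rename (swap i j)) (X_sub_X_mul_dividedDifference hkl f)
  have swap_ij := congrArg (rename (swap k l)) (X_sub_X_mul_dividedDifference hij f)
  simp only [map_mul, map_sub, rename_X, swap_apply_of_ne_of_ne hik.symm hjk.symm,
    swap_apply_of_ne_of_ne hil.symm hjl.symm, swap_apply_of_ne_of_ne hik hil,
    swap_apply_of_ne_of_ne hjk hjl] at swap_kl swap_ij
  apply mul_left_cancel₀ (mul_ne_zero (X_sub_X_ne_zero (R := R) hij) (X_sub_X_ne_zero hkl))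
  linear_combination
    (X k - X l) * X_sub_X_mul_dividedDifference hij (dividedDifference hkl f) +
      X_sub_X_mul_dividedDifference hkl f - swap_kl -
    ((X i - X j) * X_sub_X_mul_dividedDifference hkl (dividedDifference hij f) +
      X_sub_X_mul_dividedDifference hij f - swap_ij) + swaps_comm

theorem vandermonde_mul_dividedDifference₃ (hij : i ≠ j) (hjk : j ≠ k) (hik : i ≠ k)
    (f : MvPolynomial σ R) :
    (X i - X j) * (X i - X k) * (X j - X k) *
        dividedDifference hij (dividedDifference hjk (dividedDifference hij f)) =
      f - rename (swap i j) f - rename (swap j k) f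
        + rename (swap i j) (rename (swap j k) f) + rename (swap j k) (rename (swap i j) f)
        - rename (swap i j) (rename (swap j k) (rename (swap i j) f)) := by
  set d := dividedDifference hij f
  have d_eq : (X i - X j) * d = f - rename (swap i j) f := X_sub_X_mul_dividedDifference hij f
  have swap_d : (X i - X k) * rename (swap j k) d =
      rename (swap j k) f - rename (swap j k) (rename (swap i j) f) := by
    simpa [swap_apply_of_ne_of_ne hij hik] using congrArg (rename (swap j k)) d_eq
  have swap_swap_d : (X j - X k) * rename (swap i j) (rename (swap j k) d) =
      rename (swap i j) (rename (swap j k) f) -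
        rename (swap i j) (rename (swap j k) (rename (swap i j) f)) := by
    simpa [swap_apply_of_ne_of_ne hik.symm hjk.symm] using congrArg (rename (swap i j)) swap_d
  have e_eq : (X j - X k) * dividedDifference hjk d = d - rename (swap j k) d :=
    X_sub_X_mul_dividedDifference hjk d
  have swap_e : (X i - X k) * rename (swap i j) (dividedDifference hjk d) =
      d - rename (swap i j) (rename (swap j k) d) := by
    simpa [swap_apply_of_ne_of_ne hik.symm hjk.symm, d, rename_swap_dividedDifference] using
      congrArg (rename (swap i j)) e_eq
  linear_combination
    (X i - X k) * (X j - X k) * X_sub_X_mul_dividedDifference hij (dividedDifference hjk d) +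
      (X i - X k) * e_eq - (X j - X k) * swap_e + d_eq - swap_d + swap_swap_d

/- Both sides are the antisymmetrisation of `f` over the three variables divided by the
Vandermonde product, which is seen by exchanging the roles of `i` and `k`. -/
theorem dividedDifference_braid (hij : i ≠ j) (hjk : j ≠ k) (hik : i ≠ k)
    (f : MvPolynomial σ R) :
    dividedDifference hij (dividedDifference hjk (dividedDifference hij f)) =
      dividedDifference hjk (dividedDifference hij (dividedDifference hjk f)) := by
  have reversed := vandermonde_mul_dividedDifference₃ hjk.symm hij.symm hik.symm f
  simp only [dividedDifference_symm hij, dividedDifference_symm hjk, map_neg, swap_comm k j,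
    swap_comm j i] at reversed
  apply mul_left_cancel₀ (mul_ne_zero (mul_ne_zero (X_sub_X_ne_zero (R := R) hij)
    (X_sub_X_ne_zero hik)) (X_sub_X_ne_zero hjk))
  linear_combination vandermonde_mul_dividedDifference₃ hij hjk hik f - reversed -
    rename_swap_braid hij hjk hik f

end DividedDifference

section AdjacentVariables

variable {a : ℕ}

/-- The index of the first of the two variables exchanged by the `i`-th simple transposition. -/
abbrev fstIdx (i : Fin (a - 1)) : Fin a := ⟨i, by omega⟩

/-- The index of the second of the two variables exchanged by the `i`-th simple transposition. -/
abbrev sndIdx (i : Fin (a - 1)) : Fin a := ⟨i + 1, by omega⟩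

theorem fstIdx_ne_sndIdx (i : Fin (a - 1)) : fstIdx i ≠ sndIdx i :=
  Fin.ne_of_lt (Nat.lt_succ_self i)

theorem mem_symmetricSubalgebra_of_rename_swap {R : Type*} [CommSemiring R]
    {f : MvPolynomial (Fin a) R}
    (hf : ∀ i : Fin (a - 1), rename (swap (fstIdx i) (sndIdx i)) f = f) :
    f ∈ symmetricSubalgebra (Fin a) R := by
  intro e
  obtain _ | n := a
  · rw [Subsingleton.elim e 1, Perm.coe_one, rename_id_apply]
  have he : e ∈ Submonoid.closure (Set.range fun i : Fin n ↦ swap i.castSucc i.succ) := by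
    rw [Perm.mclosure_swap_castSucc_succ]
    trivial
  induction he using Submonoid.closure_induction with
  | mem _ hx =>
    obtain ⟨i, rfl⟩ := hx
    exact hf i
  | one => rw [Perm.coe_one, rename_id_apply]
  | mul x y _ _ hx hy => rw [Perm.coe_mul, ← rename_rename, hy, hx]

end AdjacentVariables

section Rank

variable (σ R : Type*)

/-- The permutation action on the variables of a polynomial ring. -/
abbrev permAction [CommSemiring R] : MulSemiringAction (Perm σ) (MvPolynomial σ R) where
  smul e f := rename e f
  one_smul := rename_id_apply
  mul_smul e e' f := (rename_rename e' e f).symm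
  smul_zero e := map_zero (rename e)
  smul_add e := map_add (rename e)
  smul_one e := map_one (rename e)
  smul_mul e := map_mul (rename e)

attribute [local instance] permAction

theorem isGaloisGroup_perm_symmetricSubalgebra [CommRing R] [Nontrivial R] :
    IsGaloisGroup (Perm σ) (symmetricSubalgebra σ R) (MvPolynomial σ R) where
  faithful := ⟨fun {e e'} h ↦ Equiv.ext fun i ↦ X_injective (R := R) <| by
    rw [← rename_X, ← rename_X]
    exact h (X i)⟩
  commutes := ⟨fun e c f ↦ by
    change rename e ((c : MvPolynomial σ R) * f) = c * rename e f
    rw [map_mul, c.2 e]⟩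
  isInvariant := ⟨fun f hf ↦ ⟨⟨f, hf⟩, rfl⟩⟩

theorem finrank_symmetricSubalgebra [Fintype σ] [CommRing R] [IsDomain R] :
    Module.finrank (symmetricSubalgebra σ R) (MvPolynomial σ R) = (Fintype.card σ).factorial := by
  classical
  have := isGaloisGroup_perm_symmetricSubalgebra σ R
  rw [← IsGaloisGroup.card_eq_finrank' (Perm σ), Nat.card_eq_fintype_card, Fintype.card_perm]

end Rank

section EvalCommuting

variable {σ S B : Type*} [CommSemiring S] [Semiring B] [Algebra S B]

open scoped IsMulCommutative in
/-- Evaluation of polynomials at pairwise commuting elements of a noncommutative algebra. -/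
def aevalOfCommute (x : σ → B) (hx : ∀ i j, Commute (x i) (x j)) : MvPolynomial σ S →ₐ[S] B :=
  have : IsMulCommutative (Algebra.adjoin S (Set.range x)) :=
    Algebra.isMulCommutative_adjoin S <| by
      rintro _ ⟨i, rfl⟩ _ ⟨j, rfl⟩
      exact hx i j
  (Algebra.adjoin S (Set.range x)).val.comp
    (aeval fun j ↦ ⟨x j, Algebra.subset_adjoin ⟨j, rfl⟩⟩)

theorem aevalOfCommute_X (x : σ → B) (hx : ∀ i j, Commute (x i) (x j)) (j : σ) :
    aevalOfCommute (S := S) x hx (X j) = x j := by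
  simp [aevalOfCommute]

end EvalCommuting

section PolynomialRepresentation

variable (a : ℕ)

/-- The action of the generators on polynomials: `u i` acts by a divided difference and `χ j` by
multiplication by `X j`. -/
def genAction :
    NHGen a → Module.End (symmetricSubalgebra (Fin a) ℤ) (MvPolynomial (Fin a) ℤ)
  | Sum.inl i => dividedDifference (fstIdx_ne_sndIdx i)
  | Sum.inr j => LinearMap.mulLeft _ (X j)

theorem lift_genAction_eq_of_rel {x y : FreeAlgebra ℤ (NHGen a)} (h : NHRel a x y) :
    FreeAlgebra.lift ℤ (genAction a) x = FreeAlgebra.lift ℤ (genAction a) y := by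
  induction h with
  | u_sq i =>
    ext1 f
    simpa [genAction] using dividedDifference_dividedDifference_self _ f
  | braid i h =>
    ext1 f
    simpa [genAction] using dividedDifference_braid _ _ (by grind) f
  | u_comm i j h =>
    have far : (i : ℕ) + 1 < j ∨ (j : ℕ) + 1 < i := by
      rcases lt_abs.mp h with h | h <;> omega
    ext1 f
    simpa [genAction] using dividedDifference_comm _ _ (by grind) f
  | chi_comm i j =>
    ext1 f
    simpa [genAction] using mul_left_comm (X i) (X j) f
  | u_chi_comm i j h1 h2 =>
    have hfst : j ≠ fstIdx i := fun h ↦ h1 (congrArg Fin.val h)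
    have hsnd : j ≠ sndIdx i := fun h ↦ h2 (congrArg Fin.val h)
    ext1 f
    simp [genAction, dividedDifference_mul, dividedDifference_X_of_ne_of_ne _ hfst hsnd,
      swap_apply_of_ne_of_ne hfst hsnd]
  | u_chi i h =>
    ext1 f
    simp [genAction, dividedDifference_mul, dividedDifference_X_left]
  | chi_u i h =>
    ext1 f
    simp [genAction, dividedDifference_mul, dividedDifference_X_right]

/-- The polynomial representation of the nilHecke ring. -/
def polynomialRep :
    NilHecke a →+* Module.End (symmetricSubalgebra (Fin a) ℤ) (MvPolynomial (Fin a) ℤ) :=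
  RingQuot.lift ⟨(FreeAlgebra.lift ℤ (genAction a)).toRingHom,
    fun _ _ h ↦ lift_genAction_eq_of_rel a h⟩

/-- The generator `u` of the nilHecke ring. -/
def u (i : Fin (a - 1)) : NilHecke a := RingQuot.mkRingHom (NHRel a) (uGen a i)

/-- The generator `χ` of the nilHecke ring. -/
def χ (j : Fin a) : NilHecke a := RingQuot.mkRingHom (NHRel a) (chiGen a j)

variable {a}

theorem polynomialRep_u (i : Fin (a - 1)) :
    polynomialRep a (u a i) = dividedDifference (fstIdx_ne_sndIdx i) := by
  simp [polynomialRep, u, genAction]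

theorem polynomialRep_χ (j : Fin a) : polynomialRep a (χ a j) = LinearMap.mulLeft _ (X j) := by
  simp [polynomialRep, χ, genAction]

theorem induction_on {P : NilHecke a → Prop} (n : NilHecke a) (intCast : ∀ c : ℤ, P c)
    (u : ∀ i, P (u a i)) (χ : ∀ j, P (χ a j)) (mul : ∀ m n, P m → P n → P (m * n))
    (add : ∀ m n, P m → P n → P (m + n)) : P n := by
  obtain ⟨n, rfl⟩ := RingQuot.mkRingHom_surjective (NHRel a) n
  induction n using FreeAlgebra.induction with
  | grade0 c => simpa using intCast c
  | grade1 g =>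
    obtain i | j := g
    · exact u i
    · exact χ j
  | mul m n hm hn => simpa using mul _ _ hm hn
  | add m n hm hn => simpa using add _ _ hm hn

end PolynomialRepresentation

section Relations

variable {a : ℕ}

theorem u_mul_χ_fst (i : Fin (a - 1)) :
    u a i * χ a (fstIdx i) = 1 + χ a (sndIdx i) * u a i := by
  simpa [u, χ] using RingQuot.mkRingHom_rel (NHRel.u_chi (i : ℕ) (by omega))

theorem χ_fst_mul_u (i : Fin (a - 1)) :
    χ a (fstIdx i) * u a i = 1 + u a i * χ a (sndIdx i) := by
  simpa [u, χ] using RingQuot.mkRingHom_rel (NHRel.chi_u (i : ℕ) (by omega))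

theorem commute_χ_u {i : Fin (a - 1)} {j : Fin a} (hfst : j ≠ fstIdx i) (hsnd : j ≠ sndIdx i) :
    Commute (χ a j) (u a i) := by
  have rel := RingQuot.mkRingHom_rel
    (NHRel.u_chi_comm i j (fun h ↦ hfst (Fin.ext h)) (fun h ↦ hsnd (Fin.ext h)))
  simpa [u, χ, Commute, SemiconjBy] using rel.symm

theorem commute_χ_χ (i j : Fin a) : Commute (χ a i) (χ a j) := by
  simpa [χ, Commute, SemiconjBy] using RingQuot.mkRingHom_rel (NHRel.chi_comm i j)

end Relations

section PolynomialSubring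

variable (a : ℕ)

/-- The ring homomorphism embedding polynomials into the nilHecke ring by `X j ↦ χ j`. -/
def ofPolynomial : MvPolynomial (Fin a) ℤ →+* NilHecke a :=
  (aevalOfCommute (χ a) commute_χ_χ).toRingHom

variable {a}

theorem ofPolynomial_X (j : Fin a) : ofPolynomial a (X j) = χ a j :=
  aevalOfCommute_X (χ a) commute_χ_χ j

theorem ofPolynomial_C (c : ℤ) : ofPolynomial a (C c) = c := by
  rw [eq_intCast C c, map_intCast]

theorem polynomialRep_ofPolynomial (f g : MvPolynomial (Fin a) ℤ) :
    polynomialRep a (ofPolynomial a f) g = f * g := by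
  induction f using MvPolynomial.induction_on generalizing g with
  | C c => rw [ofPolynomial_C, map_intCast, Module.End.intCast_apply, zsmul_eq_mul, ← eq_intCast C]
  | add p q hp hq => rw [map_add, map_add, LinearMap.add_apply, hp, hq, add_mul]
  | mul_X p k hp =>
    rw [map_mul, map_mul, Module.End.mul_apply, hp, ofPolynomial_X, polynomialRep_χ,
      LinearMap.mulLeft_apply, mul_assoc]

theorem u_mul_χ (i : Fin (a - 1)) (k : Fin a) :
    u a i * χ a k = ofPolynomial a (dividedDifference (fstIdx_ne_sndIdx i) (X k)) +
      χ a (swap (fstIdx i) (sndIdx i) k) * u a i := by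
  obtain rfl | hfst := eq_or_ne k (fstIdx i)
  · rw [dividedDifference_X_left, swap_apply_left, map_one, u_mul_χ_fst]
  obtain rfl | hsnd := eq_or_ne k (sndIdx i)
  · rw [dividedDifference_X_right, swap_apply_right, map_neg, map_one, χ_fst_mul_u,
      neg_add_cancel_left]
  · rw [dividedDifference_X_of_ne_of_ne _ hfst hsnd, swap_apply_of_ne_of_ne hfst hsnd, map_zero,
      zero_add, (commute_χ_u hfst hsnd).eq]

theorem u_mul_ofPolynomial (i : Fin (a - 1)) (f : MvPolynomial (Fin a) ℤ) :
    u a i * ofPolynomial a f = ofPolynomial a (dividedDifference (fstIdx_ne_sndIdx i) f) +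
      ofPolynomial a (rename (swap (fstIdx i) (sndIdx i)) f) * u a i := by
  induction f using MvPolynomial.induction_on with
  | C c =>
    rw [dividedDifference_C, rename_C, map_zero, zero_add, ofPolynomial_C]
    exact (Int.cast_commute c _).symm.eq
  | add p q hp hq =>
    simp only [map_add, mul_add, add_mul, hp, hq]
    abel
  | mul_X p k hp =>
    rw [map_mul, ← mul_assoc, hp, add_mul, mul_assoc, ofPolynomial_X, u_mul_χ,
      dividedDifference_mul, map_mul (rename _), rename_X]
    simp only [map_add, map_mul, ofPolynomial_X, mul_add, mul_assoc, add_assoc]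

end PolynomialSubring

section LongestElement

variable (a : ℕ)

/-- The generators `u` indexed by natural numbers, extended by zero. -/
def uSeq (i : ℕ) : NilHecke a := if h : i < a - 1 then u a ⟨i, h⟩ else 0

/-- The variables `X` indexed by natural numbers, extended by zero. -/
def XSeq (i : ℕ) : MvPolynomial (Fin a) ℤ := if h : i < a then X ⟨i, h⟩ else 0

/-- The element of the nilHecke ring attached to the longest permutation. -/
def longestElement : NilHecke a := longestWord (uSeq a) a

variable {a}

theorem uSeq_of_lt {i : ℕ} (h : i + 1 < a) : uSeq a i = u a ⟨i, by omega⟩ :=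
  dif_pos _

theorem ofPolynomial_XSeq_of_lt {j : ℕ} (h : j < a) : ofPolynomial a (XSeq a j) = χ a ⟨j, h⟩ := by
  rw [XSeq, dif_pos h, ofPolynomial_X]

theorem isNilCoxeter_uSeq : IsNilCoxeter a (uSeq a) where
  sq i hi := by
    rw [uSeq_of_lt hi]
    simpa [u] using RingQuot.mkRingHom_rel (NHRel.u_sq ⟨i, by omega⟩)
  braid i hi := by
    rw [uSeq_of_lt hi, uSeq_of_lt (by omega)]
    simpa [u] using RingQuot.mkRingHom_rel (NHRel.braid i (by omega))
  comm i j hij hj := by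
    rw [uSeq_of_lt hj, uSeq_of_lt (by omega)]
    have far : 1 < |(i : ℤ) - j| := lt_abs.mpr (Or.inr (by omega))
    simpa [u, Commute, SemiconjBy] using
      RingQuot.mkRingHom_rel (NHRel.u_comm ⟨i, by omega⟩ ⟨j, by omega⟩ far)

theorem isNilHecke_uSeq : IsNilHecke a (uSeq a) fun i ↦ ofPolynomial a (XSeq a i) where
  toIsNilCoxeter := isNilCoxeter_uSeq
  mul_self i hi := by
    rw [uSeq_of_lt hi, ofPolynomial_XSeq_of_lt hi, ofPolynomial_XSeq_of_lt (by omega)]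
    exact χ_fst_mul_u ⟨i, by omega⟩
  comm_of_ne i j hi hj hji hji' := by
    rw [uSeq_of_lt hi, ofPolynomial_XSeq_of_lt hj]
    exact commute_χ_u (Fin.ne_of_val_ne hji) (Fin.ne_of_val_ne hji')

theorem exists_one_eq_sum_longestElement : ∃ p q : Fin a.factorial → MvPolynomial (Fin a) ℤ,
    1 = ∑ i, ofPolynomial a (p i) * longestElement a * ofPolynomial a (q i) :=
  isNilHecke_uSeq.isSandwichSum_one_longestWord le_rfl

theorem u_mul_longestElement (i : Fin (a - 1)) : u a i * longestElement a = 0 := by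
  have hi : (i : ℕ) + 1 < a := by omega
  have vanish := isNilCoxeter_uSeq.mul_longestWord le_rfl hi
  rwa [uSeq_of_lt hi] at vanish

theorem polynomialRep_longestElement_mem (f : MvPolynomial (Fin a) ℤ) :
    polynomialRep a (longestElement a) f ∈ symmetricSubalgebra (Fin a) ℤ := by
  refine mem_symmetricSubalgebra_of_rename_swap fun i ↦ ?_
  rw [← dividedDifference_eq_zero_iff (fstIdx_ne_sndIdx i), ← polynomialRep_u,
    ← Module.End.mul_apply, ← map_mul, u_mul_longestElement, map_zero, LinearMap.zero_apply]

/-- The left ideal generated by the longest element is a copy of the polynomial representation. -/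
theorem mul_ofPolynomial_mul_longestElement (n : NilHecke a) (f : MvPolynomial (Fin a) ℤ) :
    n * ofPolynomial a f * longestElement a =
      ofPolynomial a (polynomialRep a n f) * longestElement a := by
  induction n using induction_on generalizing f with
  | intCast c => rw [map_intCast, Module.End.intCast_apply, map_zsmul, zsmul_eq_mul]
  | u i =>
    rw [u_mul_ofPolynomial, add_mul, mul_assoc _ (u a i), u_mul_longestElement, mul_zero,
      add_zero, polynomialRep_u]
  | χ j => rw [polynomialRep_χ, LinearMap.mulLeft_apply, map_mul, ofPolynomial_X]
  | mul m n hm hn =>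
    rw [map_mul, Module.End.mul_apply, ← hm, mul_assoc m, mul_assoc m, hn, mul_assoc]
  | add m n hm hn => simp only [map_add, LinearMap.add_apply, add_mul, hm, hn]

variable (a) in
/-- The action of the longest element, as a map to the ring of symmetric polynomials. -/
def symmetrization (f : MvPolynomial (Fin a) ℤ) : symmetricSubalgebra (Fin a) ℤ :=
  ⟨polynomialRep a (longestElement a) f, polynomialRep_longestElement_mem f⟩

theorem polynomialRep_sandwich (p q f : MvPolynomial (Fin a) ℤ) :
    polynomialRep a (ofPolynomial a p * longestElement a * ofPolynomial a q) f =
      symmetrization a (q * f) • p := by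
  rw [map_mul, map_mul, Module.End.mul_apply, Module.End.mul_apply, polynomialRep_ofPolynomial,
    polynomialRep_ofPolynomial, mul_comm]
  rfl

theorem exists_eq_sum_symmetrization_smul : ∃ p q : Fin a.factorial → MvPolynomial (Fin a) ℤ,
    ∀ f, f = ∑ i, symmetrization a (q i * f) • p i := by
  obtain ⟨p, q, one_eq⟩ := exists_one_eq_sum_longestElement (a := a)
  refine ⟨p, q, fun f ↦ ?_⟩
  simpa only [map_one, Module.End.one_apply, map_sum, LinearMap.sum_apply,
    polynomialRep_sandwich] using congrArg (polynomialRep a · f) one_eq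

theorem polynomialRep_injective : Function.Injective (polynomialRep a) := by
  obtain ⟨p, q, one_eq⟩ := exists_one_eq_sum_longestElement (a := a)
  refine (injective_iff_map_eq_zero _).mpr fun n hn ↦ ?_
  rw [← mul_one n, one_eq, Finset.mul_sum]
  refine Finset.sum_eq_zero fun i _ ↦ ?_
  rw [← mul_assoc, ← mul_assoc, mul_ofPolynomial_mul_longestElement, hn, LinearMap.zero_apply,
    map_zero, zero_mul, zero_mul]

theorem polynomialRep_surjective : Function.Surjective (polynomialRep a) := by
  obtain ⟨p, q, eq_sum⟩ := exists_eq_sum_symmetrization_smul (a := a)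
  refine fun F ↦
    ⟨∑ i, ofPolynomial a (F (p i)) * longestElement a * ofPolynomial a (q i), ?_⟩
  ext1 f
  conv_rhs => rw [eq_sum f]
  simp only [map_sum, LinearMap.sum_apply, polynomialRep_sandwich, map_smul]

theorem nonempty_basis_symmetricSubalgebra :
    Nonempty (Module.Basis (Fin a.factorial) (symmetricSubalgebra (Fin a) ℤ)
      (MvPolynomial (Fin a) ℤ)) := by
  obtain ⟨p, q, eq_sum⟩ := exists_eq_sum_symmetrization_smul (a := a)
  refine ⟨basisOfTopLeSpanOfCardEqFinrank p (fun f _ ↦ ?_) ?_⟩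
  · rw [eq_sum f]
    exact Submodule.sum_mem _ fun i _ ↦ Submodule.smul_mem _ _ (Submodule.subset_span ⟨i, rfl⟩)
  · rw [finrank_symmetricSubalgebra, Fintype.card_fin, Fintype.card_fin]

end LongestElement

end NilHecke

set_option synthInstance.maxHeartbeats 1000000 in
theorem stmt6 (a : ℕ) (ha : 1 ≤ a) :
    Nonempty (NilHecke a ≃+*
      Matrix (Fin (Nat.factorial a)) (Fin (Nat.factorial a))
        ↥(MvPolynomial.symmetricSubalgebra (Fin a) ℤ)) := by
  obtain ⟨b⟩ := NilHecke.nonempty_basis_symmetricSubalgebra (a := a)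
  exact ⟨(RingEquiv.ofBijective (NilHecke.polynomialRep a)
    ⟨NilHecke.polynomialRep_injective, NilHecke.polynomialRep_surjective⟩).trans
      (LinearMap.toMatrixAlgEquiv b).toRingEquiv⟩
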